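/- Let G = N_{3,4}. For every finite family H₁, …, H_s of finite-index subgroups of G and every family of group homomorphisms f_i : H_i → G (1 ≤ i ≤ s), there exists a nontrivial subgroup N of the intersection ⋂_{i=1}^{s} H_i that is normal in G and satisfies f_i(N) ≤ N for all i = 1, …, s. (Consequently N_{3,4} admits no faithful state-closed representation on any regular rooted tree, transitive or not.) -/

import Mathlib

/-!
Write `p = [a, c]`, `q = [a, d]`, `r = [b, c]`, `s = [b, d]`, and `x = [a, q]`, `y = [a, b]`,
`z = [c, d]`, `w = [p, b]`, `v = [q, b]`. The defining relations express every triple commutator of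
the generators through `x, y, z, w, v`.

The subgroup `N` is generated by `z ^ (n ^ 3)`, where all `n`-th powers lie in `⋂ i, H i`. The
elements `A = a ^ n`, `B = b ^ n`, `C = c ^ n`, `D = d ^ n` satisfy the defining relations, except
that the last two become `[A, B] ^ n = [[A, C], C]` and `[C, D] ^ n = [A, [A, C]]`; moreover
`[A, [A, C]] = z ^ (n ^ 3)`. Homomorphisms preserve these relations, so it is enough that any
solution of them has `[A, [A, C]] ∈ {1, z ^ (n ^ 3)}`.

In the Malcev completion this is a question about the Lie algebra of class three with basis
`a, …, v`. The relations force `[A, B] ^ n` and `[C, D] ^ n` to be triple commutators, so modulo the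
derived algebra each of the pairs `A, B` and `C, D` is linearly dependent or spans one of the planes
`⟨a, b⟩`, `⟨c, d⟩`. In every case but one the remaining relations are contradictory or kill
`[A, [A, C]]`; in the last one they force `[A, [A, C]] = n ^ 3 • z`.

To return to the group one needs that `x, y, z, w, v` are central. This follows by conjugating a
relation `u ^ h = u * t` by a third generator and expanding `(u ^ h) ^ g` in two ways. Then all
triple commutators lie in the subgroup generated by these five elements, on which the homomorphism
to the Malcev completion is injective, because it sends the five elements to the exponentials of
linearly independent central vectors.
-/

/-- The commutator `[x, y] = x⁻¹ y⁻¹ x y`. -/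
def cmt {G : Type*} [Group G] (x y : G) : G := x⁻¹ * y⁻¹ * x * y

/-- The defining relators of the Bludov–Gusev group `N_{3,4}` on generators
`a, b, c, d` (indexed by `0, 1, 2, 3`). -/
def N34Rels : Set (FreeGroup (Fin 4)) :=
  let a : FreeGroup (Fin 4) := FreeGroup.of 0
  let b : FreeGroup (Fin 4) := FreeGroup.of 1
  let c : FreeGroup (Fin 4) := FreeGroup.of 2
  let d : FreeGroup (Fin 4) := FreeGroup.of 3
  {cmt a (cmt a b), cmt (cmt a b) b, cmt a (cmt c d), cmt (cmt a d) d,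
   cmt b (cmt b c), cmt b (cmt c d), cmt c (cmt c d), cmt (cmt c d) d,
   cmt a (cmt b c) * cmt (cmt a c) b,
   cmt a (cmt b d) * cmt (cmt a d) b,
   cmt a (cmt a d) * (cmt (cmt b c) c)⁻¹,
   cmt a (cmt a c) * (cmt b (cmt b d))⁻¹,
   cmt (cmt a c) b * (cmt (cmt b d) d)⁻¹,
   cmt (cmt a c) c * (cmt (cmt b d) c)⁻¹,
   cmt (cmt a d) b * (cmt (cmt a d) c)⁻¹,
   cmt a b * (cmt (cmt a c) c)⁻¹,
   cmt c d * (cmt a (cmt a c))⁻¹}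

/-- The Bludov–Gusev group `N_{3,4}`, presented on generators `a, b, c, d`. -/
abbrev N34 : Type := PresentedGroup N34Rels

/-- The generator `a` of `N_{3,4}`. -/
def ga : N34 := PresentedGroup.of 0
/-- The generator `b` of `N_{3,4}`. -/
def gb : N34 := PresentedGroup.of 1
/-- The generator `c` of `N_{3,4}`. -/
def gc : N34 := PresentedGroup.of 2
/-- The generator `d` of `N_{3,4}`. -/
def gd : N34 := PresentedGroup.of 3

/-! ### Commutators and conjugation -/

section Commutators
variable {G K : Type*} [Group G] [Group K]

theorem map_cmt (f : G →* K) (g h : G) : f (cmt g h) = cmt (f g) (f h) := by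
  simp only [cmt, map_mul, map_inv]

theorem cmt_eq_one_iff {g h : G} : cmt g h = 1 ↔ Commute g h := by
  rw [cmt, mul_assoc, ← mul_inv_rev, inv_mul_eq_one, eq_comm]
  exact Iff.rfl

theorem cmt_inv (g h : G) : (cmt g h)⁻¹ = cmt h g := by
  simp [cmt, mul_assoc]

/-- Conjugation `u ↦ u ^ g = g⁻¹ u g`, as an endomorphism. -/
def conjBy (g : G) : G →* G := (MulAut.conj g⁻¹).toMonoidHom

theorem conjBy_apply (g u : G) : conjBy g u = g⁻¹ * u * g := by
  simp [conjBy]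

theorem conjBy_injective (g : G) : Function.Injective (conjBy g) :=
  (MulAut.conj g⁻¹).injective

@[simp]
theorem conjBy_mul (g h u : G) : conjBy (g * h) u = conjBy h (conjBy g u) := by
  simp [conjBy_apply, mul_assoc]

theorem conjBy_conjBy (g h u : G) : conjBy g (conjBy h u) = conjBy (conjBy g h) (conjBy g u) := by
  simp [conjBy_apply, mul_assoc]

theorem conjBy_eq_mul_cmt (g u : G) : conjBy g u = u * cmt u g := by
  simp [conjBy_apply, cmt, mul_assoc]

theorem conjBy_eq_self_iff {g u : G} : conjBy g u = u ↔ Commute u g := by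
  rw [conjBy_eq_mul_cmt, mul_eq_left, cmt_eq_one_iff]

theorem commute_conjBy_iff (g : G) {u v : G} :
    Commute (conjBy g u) (conjBy g v) ↔ Commute u v := by
  simp only [commute_iff_eq, ← map_mul, (conjBy_injective g).eq_iff]

@[simp]
theorem conjBy_eq_self {g u : G} (h : Commute u g) : conjBy g u = u :=
  conjBy_eq_self_iff.2 h

@[simp]
theorem conjBy_eq_self' {g u : G} (h : Commute g u) : conjBy g u = u :=
  conjBy_eq_self h.symm

theorem conjBy_swap {g u t : G} (h : conjBy g u = u * t) : conjBy u g = g * t⁻¹ := by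
  rw [conjBy_eq_mul_cmt, mul_right_inj] at h
  rw [conjBy_eq_mul_cmt, ← h, cmt_inv]

/-- The relation `u ^ h = u * t`, conjugated by `g`. -/
theorem conjBy_relation {g h u t u' h' : G} (H : conjBy h u = u * t) (hu : conjBy g u = u * u')
    (hh : conjBy g h = h * h') :
    conjBy h' (u * t * conjBy h u') = u * u' * conjBy g t := by
  rw [← H, ← map_mul, ← conjBy_mul, ← hu, ← hh, ← conjBy_conjBy, H, map_mul, hu]

theorem commute_of_conjBy {e u g t : G} (h : conjBy g u = u * t) (hu : Commute e u)
    (hg : Commute e g) : Commute e t := by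
  rw [conjBy_eq_mul_cmt, mul_right_inj] at h
  rw [← h]
  exact ((hu.inv_right.mul_right hg.inv_right).mul_right hu).mul_right hg

theorem commute_mul_iff_right {u v t : G} (h : Commute u v) : Commute u (v * t) ↔ Commute u t :=
  ⟨fun H => by simpa using h.inv_right.mul_right H, h.mul_right⟩

theorem commute_mul_iff_left {u v t : G} (h : Commute u t) : Commute u (v * t) ↔ Commute u v :=
  ⟨fun H => by simpa using H.mul_right h.inv_right, fun H => H.mul_right h⟩

theorem commute_mk'_iff (M : Subgroup G) [M.Normal] {g h : G} :
    Commute (QuotientGroup.mk' M g) (QuotientGroup.mk' M h) ↔ cmt g h ∈ M := by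
  rw [← cmt_eq_one_iff, ← map_cmt, ← MonoidHom.mem_ker, QuotientGroup.ker_mk']

theorem normal_of_le_center {M : Subgroup G} (h : M ≤ Subgroup.center G) : M.Normal :=
  ⟨fun t ht g => by rwa [Subgroup.mem_center_iff.1 (h ht) g, mul_inv_cancel_right]⟩

theorem zpowers_subgroupOf {M : Subgroup G} (g : M) :
    (Subgroup.zpowers (g : G)).subgroupOf M = .zpowers g := by
  rw [← M.subtype_apply, ← MonoidHom.map_zpowers, Subgroup.subgroupOf,
    Subgroup.comap_map_eq_self_of_injective M.subtype_injective]

end Commutators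

/-! ### The relations satisfied by the powers of the generators -/

/-- The defining relations of `N34`, with `[a, b]` and `[c, d]` replaced by their `n`-th powers in
the last two: `n = 1` is the presentation, and the `n`-th powers of the generators satisfy the
relations with parameter `n`. -/
structure PowerRelations {G : Type*} [Group G] (n : ℕ) (a b c d : G) : Prop where
  aab : cmt a (cmt a b) = 1
  abb : cmt (cmt a b) b = 1
  acd : cmt a (cmt c d) = 1
  add : cmt (cmt a d) d = 1
  bbc : cmt b (cmt b c) = 1
  bcd : cmt b (cmt c d) = 1
  ccd : cmt c (cmt c d) = 1
  cdd : cmt (cmt c d) d = 1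
  abc : cmt a (cmt b c) = cmt b (cmt a c)
  abd : cmt a (cmt b d) = cmt b (cmt a d)
  aad : cmt a (cmt a d) = cmt (cmt b c) c
  aac : cmt a (cmt a c) = cmt b (cmt b d)
  acb : cmt (cmt a c) b = cmt (cmt b d) d
  acc : cmt (cmt a c) c = cmt (cmt b d) c
  adb : cmt (cmt a d) b = cmt (cmt a d) c
  ab_pow : cmt a b ^ n = cmt (cmt a c) c
  cd_pow : cmt c d ^ n = cmt a (cmt a c)

namespace PowerRelations
variable {G K : Type*} [Group G] [Group K] {n : ℕ} {a b c d : G}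

theorem map (f : G →* K) (h : PowerRelations n a b c d) :
    PowerRelations n (f a) (f b) (f c) (f d) := by
  constructor <;> simp only [← map_cmt, ← map_pow, h.aab, h.abb, h.acd, h.add, h.bbc, h.bcd, h.ccd,
    h.cdd, h.abc, h.abd, h.aad, h.aac, h.acb, h.acc, h.adb, h.ab_pow, h.cd_pow, map_one]

theorem of_injOn {f : G →* K} {S : Subgroup G} (hf : Set.InjOn f S)
    (hl : ∀ g h k, cmt (cmt g h) k ∈ S) (hab : cmt a b ∈ S) (hcd : cmt c d ∈ S)
    (h : PowerRelations n (f a) (f b) (f c) (f d)) : PowerRelations n a b c d := by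
  have hr g h k : cmt g (cmt h k) ∈ S := cmt_inv (cmt h k) g ▸ S.inv_mem (hl h k g)
  constructor <;> apply hf <;>
    first
    | exact hl _ _ _
    | exact hr _ _ _
    | exact S.one_mem
    | exact S.pow_mem ‹_› n
    | simp only [map_cmt, map_pow, map_one, h.aab, h.abb, h.acd, h.add, h.bbc, h.bcd, h.ccd,
        h.cdd, h.abc, h.abd, h.aad, h.aac, h.acb, h.acc, h.adb, h.ab_pow, h.cd_pow]

end PowerRelations

namespace N34

theorem forall_relators_iff {K : Type*} [Group K] (φ : FreeGroup (Fin 4) →* K) :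
    (∀ R ∈ N34Rels, φ R = 1) ↔
      PowerRelations 1 (φ (.of 0)) (φ (.of 1)) (φ (.of 2)) (φ (.of 3)) := by
  simp only [N34Rels, Set.mem_insert_iff, Set.mem_singleton_iff, forall_eq_or_imp, forall_eq,
    map_mul, cmt_inv, map_cmt, mul_eq_one_iff_eq_inv]
  refine ⟨fun h => ?_, fun h => ?_⟩
  · constructor <;> (try rw [pow_one]) <;> tauto
  · obtain ⟨aab, abb, acd, add, bbc, bcd, ccd, cdd, abc, abd, aad, aac, acb, acc, adb, ab, cd⟩ := h
    rw [pow_one] at ab cd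
    exact ⟨aab, abb, acd, add, bbc, bcd, ccd, cdd, abc, abd, aad, aac, acb, acc, adb, ab, cd⟩

theorem powerRelations_generators : PowerRelations 1 ga gb gc gd :=
  (forall_relators_iff (PresentedGroup.mk N34Rels)).1 fun _ => PresentedGroup.one_of_mem

/-! ### Centrality of the triple commutators -/

/-- The commutator `p = [a, c]`. -/
def gp : N34 := cmt ga gc

/-- The commutator `q = [a, d]`. -/
def gq : N34 := cmt ga gd

/-- The commutator `r = [b, c]`. -/
def gr : N34 := cmt gb gc

/-- The commutator `s = [b, d]`. -/
def gs : N34 := cmt gb gd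

/-- The triple commutator `x = [a, [a, d]]`. -/
def gx : N34 := cmt ga gq

/-- The commutator `y = [a, b]`, which is also the triple commutator `[[a, c], c]`. -/
def gy : N34 := cmt ga gb

/-- The commutator `z = [c, d]`, which is also the triple commutator `[a, [a, c]]`. -/
def gz : N34 := cmt gc gd

/-- The triple commutator `w = [[a, c], b]`. -/
def gw : N34 := cmt gp gb

/-- The triple commutator `v = [[a, d], b]`. -/
def gv : N34 := cmt gq gb

theorem commute_of_generators {K : Type*} [Group K] (φ : N34 →* K) {t : K}
    (ha : Commute t (φ ga)) (hb : Commute t (φ gb)) (hc : Commute t (φ gc))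
    (hd : Commute t (φ gd)) (g : N34) : Commute t (φ g) := by
  have h : Subgroup.closure (Set.range PresentedGroup.of) ≤
      (Subgroup.centralizer {t}).comap φ := by
    rw [Subgroup.closure_le, Set.range_subset_iff, Fin.forall_fin_succ, Fin.forall_fin_succ,
      Fin.forall_fin_succ, Fin.forall_fin_one]
    simp only [SetLike.mem_coe, Subgroup.mem_comap, Subgroup.mem_centralizer_singleton_iff]
    exact ⟨ha.symm, hb.symm, hc.symm, hd.symm⟩
  rw [PresentedGroup.closure_range_of] at h
  exact (Subgroup.mem_centralizer_singleton_iff.1 (h (Subgroup.mem_top g)) :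
    Commute (φ g) t).symm

@[simp] theorem conjBy_gc_ga : conjBy gc ga = ga * gp := conjBy_eq_mul_cmt _ _

@[simp] theorem conjBy_gd_ga : conjBy gd ga = ga * gq := conjBy_eq_mul_cmt _ _

@[simp] theorem conjBy_gc_gb : conjBy gc gb = gb * gr := conjBy_eq_mul_cmt _ _

@[simp] theorem conjBy_gd_gb : conjBy gd gb = gb * gs := conjBy_eq_mul_cmt _ _

@[simp] theorem conjBy_gb_ga : conjBy gb ga = ga * gy := conjBy_eq_mul_cmt _ _

@[simp] theorem conjBy_gd_gc : conjBy gd gc = gc * gz := conjBy_eq_mul_cmt _ _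

@[simp] theorem conjBy_ga_gc : conjBy ga gc = gc * gp⁻¹ := conjBy_swap conjBy_gc_ga

@[simp] theorem conjBy_ga_gb : conjBy ga gb = gb * gy⁻¹ := conjBy_swap conjBy_gb_ga

@[simp] theorem conjBy_gb_gc : conjBy gb gc = gc * gr⁻¹ := conjBy_swap conjBy_gc_gb

@[simp] theorem conjBy_gb_gd : conjBy gb gd = gd * gs⁻¹ := conjBy_swap conjBy_gd_gb

@[simp] theorem conjBy_gc_gd : conjBy gc gd = gd * gz⁻¹ := conjBy_swap conjBy_gd_gc

@[simp]
theorem commute_gz (g : N34) : Commute gz g :=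
  commute_of_generators (.id _) (cmt_eq_one_iff.1 powerRelations_generators.acd).symm
    (cmt_eq_one_iff.1 powerRelations_generators.bcd).symm
    (cmt_eq_one_iff.1 powerRelations_generators.ccd).symm
    (cmt_eq_one_iff.1 powerRelations_generators.cdd) g

@[simp] theorem commute_gy_ga : Commute gy ga :=
  (cmt_eq_one_iff.1 powerRelations_generators.aab).symm

@[simp] theorem commute_gy_gb : Commute gy gb := cmt_eq_one_iff.1 powerRelations_generators.abb

@[simp] theorem commute_gq_gd : Commute gq gd := cmt_eq_one_iff.1 powerRelations_generators.add

@[simp] theorem commute_gr_gb : Commute gr gb :=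
  (cmt_eq_one_iff.1 powerRelations_generators.bbc).symm

theorem cmt_gp_ga : cmt gp ga = gz⁻¹ := by
  have h : gz ^ 1 = cmt ga gp := powerRelations_generators.cd_pow
  rw [← cmt_inv, ← h, pow_one]

theorem cmt_gp_gb : cmt gp gb = gw := rfl

theorem cmt_gp_gc : cmt gp gc = gy :=
  powerRelations_generators.ab_pow.symm.trans (pow_one gy)

theorem cmt_gq_ga : cmt gq ga = gx⁻¹ := (cmt_inv _ _).symm

theorem cmt_gq_gb : cmt gq gb = gv := rfl

theorem cmt_gq_gc : cmt gq gc = gv := powerRelations_generators.adb.symm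

theorem cmt_gr_ga : cmt gr ga = gw := by
  rw [← cmt_inv, inv_eq_iff_eq_inv, gw, cmt_inv]
  exact powerRelations_generators.abc

theorem cmt_gr_gc : cmt gr gc = gx := powerRelations_generators.aad.symm

theorem cmt_gs_ga : cmt gs ga = gv := by
  rw [← cmt_inv, inv_eq_iff_eq_inv, gv, cmt_inv]
  exact powerRelations_generators.abd

theorem cmt_gs_gb : cmt gs gb = gz⁻¹ := by
  have h : cmt ga gp = cmt gb gs := powerRelations_generators.aac
  rw [← cmt_inv, ← h, cmt_inv, cmt_gp_ga]

theorem cmt_gs_gc : cmt gs gc = gy := powerRelations_generators.acc.symm.trans cmt_gp_gc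

theorem cmt_gs_gd : cmt gs gd = gw := powerRelations_generators.acb.symm

@[simp] theorem conjBy_ga_gp : conjBy ga gp = gp * gz⁻¹ := by
  rw [conjBy_eq_mul_cmt, cmt_gp_ga]

@[simp] theorem conjBy_gb_gp : conjBy gb gp = gp * gw := by
  rw [conjBy_eq_mul_cmt, cmt_gp_gb]

@[simp] theorem conjBy_gc_gp : conjBy gc gp = gp * gy := by
  rw [conjBy_eq_mul_cmt, cmt_gp_gc]

@[simp] theorem conjBy_ga_gq : conjBy ga gq = gq * gx⁻¹ := by
  rw [conjBy_eq_mul_cmt, cmt_gq_ga]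

@[simp] theorem conjBy_gb_gq : conjBy gb gq = gq * gv := by
  rw [conjBy_eq_mul_cmt, cmt_gq_gb]

@[simp] theorem conjBy_gc_gq : conjBy gc gq = gq * gv := by
  rw [conjBy_eq_mul_cmt, cmt_gq_gc]

@[simp] theorem conjBy_ga_gr : conjBy ga gr = gr * gw := by
  rw [conjBy_eq_mul_cmt, cmt_gr_ga]

@[simp] theorem conjBy_gc_gr : conjBy gc gr = gr * gx := by
  rw [conjBy_eq_mul_cmt, cmt_gr_gc]

@[simp] theorem conjBy_ga_gs : conjBy ga gs = gs * gv := by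
  rw [conjBy_eq_mul_cmt, cmt_gs_ga]

@[simp] theorem conjBy_gb_gs : conjBy gb gs = gs * gz⁻¹ := by
  rw [conjBy_eq_mul_cmt, cmt_gs_gb]

@[simp] theorem conjBy_gc_gs : conjBy gc gs = gs * gy := by
  rw [conjBy_eq_mul_cmt, cmt_gs_gc]

@[simp] theorem conjBy_gd_gs : conjBy gd gs = gs * gw := by
  rw [conjBy_eq_mul_cmt, cmt_gs_gd]

@[simp]
theorem mul_gz_inv_mul (g h : N34) : g * (gz⁻¹ * h) = gz⁻¹ * (g * h) :=
  ((commute_gz g).inv_left.left_comm h).symm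

@[simp]
theorem mul_gz_inv (g : N34) : g * gz⁻¹ = gz⁻¹ * g :=
  (commute_gz g).inv_left.eq.symm

@[simp]
theorem commute_gz_inv_mul {g h : N34} : Commute g (gz⁻¹ * h) ↔ Commute g h :=
  commute_mul_iff_right (commute_gz g).symm.inv_right

@[simp]
theorem commute_mul_gz {g h : N34} : Commute g (h * gz) ↔ Commute g h :=
  commute_mul_iff_left (commute_gz g).symm

@[simp] theorem commute_gy_gp : Commute gy gp := by
  simpa [mul_assoc, conjBy_eq_self_iff]
    using conjBy_relation conjBy_gc_gp conjBy_ga_gp conjBy_ga_gc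

@[simp] theorem commute_gy_gw : Commute gy gw :=
  commute_of_conjBy conjBy_gb_gp commute_gy_gp commute_gy_gb

@[simp] theorem commute_gw_ga : Commute gw ga := by
  have h : conjBy (ga * gy) gw = gw := by
    simpa [mul_assoc] using conjBy_relation conjBy_ga_gp conjBy_gb_gp conjBy_gb_ga
  exact (commute_mul_iff_left commute_gy_gw.symm).1 (conjBy_eq_self_iff.1 h)

theorem commute_gq_mul_gv_gd : Commute (gq * gv) gd := by
  simpa using commute_gq_gd.map (conjBy gc)

@[simp] theorem commute_gv_gd : Commute gv gd :=
  ((commute_mul_iff_right commute_gq_gd.symm).1 commute_gq_mul_gv_gd.symm).symm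

theorem commute_gq_mul_gv_gs : Commute (gq * gv) gs := by
  simpa [commute_mul_iff_right commute_gq_mul_gv_gd] using commute_gq_gd.map (conjBy gb)

@[simp] theorem commute_gq_gs : Commute gq gs := by
  rw [← commute_conjBy_iff gb]
  simpa using commute_gq_mul_gv_gs

@[simp] theorem commute_gv_gs : Commute gv gs :=
  ((commute_mul_iff_right commute_gq_gs.symm).1 commute_gq_mul_gv_gs.symm).symm

@[simp] theorem commute_gq_gw : Commute gq gw := by
  simpa [commute_mul_iff_right] using commute_gq_gs.map (conjBy gd)

@[simp] theorem commute_gv_gw : Commute gv gw := by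
  simpa [commute_mul_iff_right] using commute_gv_gs.map (conjBy gd)

theorem commute_gq_mul_gv_gy : Commute (gq * gv) gy := by
  simpa [commute_mul_iff_right commute_gq_mul_gv_gs] using commute_gq_gs.map (conjBy gc)

@[simp] theorem commute_gq_gy : Commute gq gy := by
  rw [← commute_conjBy_iff gb]
  simpa using commute_gq_mul_gv_gy

@[simp] theorem commute_gv_gy : Commute gv gy :=
  ((commute_mul_iff_right commute_gq_gy.symm).1 commute_gq_mul_gv_gy.symm).symm

@[simp] theorem commute_gv_gq : Commute gv gq := by
  simpa [mul_assoc, conjBy_eq_self_iff, commute_gv_gw.eq]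
    using conjBy_relation conjBy_ga_gs conjBy_gd_gs conjBy_gd_ga

@[simp] theorem commute_gy_gx : Commute gy gx := by
  simpa using commute_of_conjBy conjBy_ga_gq commute_gq_gy.symm commute_gy_ga

@[simp] theorem commute_gw_gx : Commute gw gx := by
  simpa using commute_of_conjBy conjBy_ga_gq commute_gq_gw.symm commute_gw_ga

theorem conjBy_gs_gy : conjBy gs gy = conjBy gd gy := by
  have hq : Commute gq (conjBy gs gy) := by simpa using commute_gq_gy.map (conjBy gs)
  have hv : Commute gv (conjBy gs gy) := by simpa using commute_gv_gy.map (conjBy gs)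
  simpa [mul_assoc, conjBy_swap conjBy_ga_gs, hv.symm.left_comm, hv.symm.eq, hq.symm.left_comm,
    hq.symm.eq, commute_gv_gq.symm.left_comm]
    using conjBy_relation conjBy_gb_ga conjBy_gd_ga conjBy_gd_gb

@[simp] theorem commute_gy_gd : Commute gy gd := by
  rw [← commute_conjBy_iff gb, conjBy_gb_gd, conjBy_eq_self commute_gy_gb, ← conjBy_eq_self_iff,
    conjBy_mul, ← conjBy_gs_gy, ← conjBy_mul, mul_inv_cancel, conjBy_eq_self (.one_right _)]

@[simp] theorem commute_gy_gs : Commute gy gs :=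
  commute_of_conjBy conjBy_gd_gb commute_gy_gb commute_gy_gd

@[simp] theorem commute_gv_gb : Commute gv gb := by
  simpa [mul_assoc, conjBy_eq_self_iff, eq_comm (a := gv)]
    using conjBy_relation conjBy_ga_gs conjBy_gb_gs conjBy_gb_ga

@[simp] theorem commute_gw_gc : Commute gw gc := by
  simpa [mul_assoc, conjBy_eq_self_iff, commute_gy_gw.symm.eq]
    using conjBy_relation conjBy_gc_gs conjBy_gd_gs conjBy_gd_gc

@[simp] theorem commute_gw_gp : Commute gw gp :=
  commute_of_conjBy conjBy_gc_ga commute_gw_ga commute_gw_gc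

theorem conjBy_gd_gr_eq : conjBy gd gr = conjBy gs gr * gy := by
  rw [conjBy_apply gs, mul_assoc, mul_assoc, ← mul_assoc gr, eq_inv_mul_iff_mul_eq]
  simpa [mul_assoc] using (conjBy_relation conjBy_gc_gb conjBy_gd_gb conjBy_gd_gc).symm

@[simp] theorem commute_gr_gs : Commute gr gs := by
  have hb : Commute (conjBy gs gr) gb := by
    simpa [conjBy_swap conjBy_gb_gs] using commute_gr_gb.map (conjBy gs)
  have h : Commute (conjBy gs gr * gy) gs := by
    simpa [conjBy_gd_gr_eq, commute_mul_iff_right (hb.mul_left commute_gy_gb)]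
      using commute_gr_gb.map (conjBy gd)
  rw [← commute_conjBy_iff gs, conjBy_eq_self (.refl gs)]
  exact ((commute_mul_iff_left commute_gy_gs.symm).1 h.symm).symm

@[simp] theorem conjBy_gd_gr : conjBy gd gr = gr * gy := by
  rw [conjBy_gd_gr_eq, conjBy_eq_self commute_gr_gs]

@[simp] theorem commute_gw_gr : Commute gw gr := by
  have h : Commute (gr * gy) gw := by
    simpa [commute_mul_iff_right (commute_gr_gs.mul_left commute_gy_gs)]
      using commute_gr_gs.map (conjBy gd)
  exact (commute_mul_iff_left commute_gy_gw.symm).1 h.symm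

theorem commute_gp_mul_gy_gr : Commute (gp * gy) gr := by
  have h : conjBy gr (gp * gy) * gw = gp * gy * gw := by
    simpa [mul_assoc, commute_gy_gw.symm.eq]
      using conjBy_relation conjBy_gb_gp conjBy_gc_gp conjBy_gc_gb
  exact conjBy_eq_self_iff.1 (mul_right_cancel h)

@[simp] theorem commute_gy_gc : Commute gy gc := by
  have hw : Commute gw (conjBy gr gp) := by simpa using commute_gw_gp.map (conjBy gr)
  have hw' : Commute gw (conjBy gr gy) := by simpa using commute_gy_gw.symm.map (conjBy gr)
  have h : conjBy gr gy * conjBy gr gp = gp * gy := by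
    rw [← map_mul, commute_gy_gp.eq, conjBy_eq_self commute_gp_mul_gy_gr]
  have h' : gw⁻¹ * (conjBy gr gy * conjBy gr gp * gw) = gp * conjBy gc gy := by
    simpa [mul_assoc, conjBy_swap conjBy_ga_gr]
      using conjBy_relation conjBy_gb_ga conjBy_gc_ga conjBy_gc_gb
  rw [← (hw'.mul_right hw).eq, inv_mul_cancel_left, h, mul_right_inj] at h'
  exact conjBy_eq_self_iff.1 h'.symm

@[simp] theorem commute_gy_gr : Commute gy gr :=
  commute_of_conjBy conjBy_gc_gb commute_gy_gb commute_gy_gc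

@[simp] theorem commute_gr_gp : Commute gr gp :=
  (commute_mul_iff_left commute_gy_gr.symm).1 commute_gp_mul_gy_gr.symm

@[simp] theorem commute_gw_gb : Commute gw gb := by
  have h := conjBy_relation conjBy_ga_gr (by simp : conjBy gb gr = gr * 1) conjBy_gb_ga
  simpa [mul_assoc, conjBy_eq_self_iff, eq_comm (a := gw)] using h

@[simp] theorem commute_gx_gd : Commute gx gd := by
  have h := conjBy_relation conjBy_gc_gr conjBy_gd_gr conjBy_gd_gc
  simpa [mul_assoc, conjBy_eq_self_iff, eq_comm (a := gx), commute_gy_gx.symm.eq] using h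

@[simp] theorem commute_gx_gq : Commute gx gq := by
  have h := conjBy_relation conjBy_ga_gq (by simp : conjBy gd gq = gq * 1) conjBy_gd_ga
  simpa [mul_assoc, conjBy_eq_self_iff] using h

@[simp] theorem commute_gx_gp : Commute gx gp := by
  have h : Commute (gr * gx) (gp * gy) := by simpa using commute_gr_gp.map (conjBy gc)
  rw [commute_mul_iff_left (commute_gy_gr.symm.mul_left commute_gy_gx.symm)] at h
  exact ((commute_mul_iff_right commute_gr_gp.symm).1 h.symm).symm

theorem conjBy_gd_gp_eq : conjBy gd gp = conjBy gq gp * gv := by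
  rw [conjBy_apply gq, mul_assoc, mul_assoc, ← mul_assoc gp, eq_inv_mul_iff_mul_eq]
  simpa [mul_assoc] using (conjBy_relation conjBy_gc_ga conjBy_gd_ga conjBy_gd_gc).symm

@[simp] theorem commute_gx_conjBy_gq_gp : Commute gx (conjBy gq gp) := by
  simpa using commute_gx_gp.map (conjBy gq)

@[simp] theorem commute_gx_gv : Commute gx gv := by
  simpa [conjBy_gd_gp_eq, commute_mul_iff_right] using commute_gx_gp.map (conjBy gd)

theorem commute_gy_cmt_gr_gq : Commute gy (cmt gr gq) :=
  commute_of_conjBy (conjBy_eq_mul_cmt gq gr) commute_gy_gr commute_gq_gy.symm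

theorem conjBy_gd_gw : conjBy gd gw = cmt gr gq * gw := by
  have h : cmt gr gq * (gw * gy) = gy * conjBy gd gw := by
    simpa [mul_assoc, conjBy_eq_mul_cmt gq gr]
      using conjBy_relation conjBy_ga_gr conjBy_gd_gr conjBy_gd_ga
  rw [← commute_gy_gw.eq, commute_gy_cmt_gr_gq.symm.left_comm, mul_right_inj] at h
  exact h.symm

@[simp] theorem commute_gr_cmt_gr_gq : Commute gr (cmt gr gq) := by
  have h : Commute (cmt gr gq * gw) (gr * gy) := by
    simpa [conjBy_gd_gw] using commute_gw_gr.map (conjBy gd)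
  rw [commute_mul_iff_left (commute_gy_cmt_gr_gq.mul_right commute_gy_gw).symm] at h
  exact (commute_mul_iff_left commute_gw_gr.symm).1 h.symm

@[simp] theorem commute_gc_cmt_gr_gq : Commute gc (cmt gr gq) := by
  have h : Commute (cmt gr gq * gw) gc := by
    simpa [conjBy_gd_gw] using commute_gw_gc.map (conjBy gd)
  exact (commute_mul_iff_left commute_gw_gc.symm).1 h.symm

@[simp] theorem commute_ga_cmt_gr_gq : Commute ga (cmt gr gq) := by
  have h : Commute (cmt gr gq * gw) (ga * gq) := by
    simpa [conjBy_gd_gw] using commute_gw_ga.map (conjBy gd)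
  have hq : Commute gq (cmt gr gq * gw) := by
    simpa [conjBy_gd_gw] using commute_gq_gw.map (conjBy gd)
  rw [commute_mul_iff_left hq.symm] at h
  exact (commute_mul_iff_left commute_gw_ga.symm).1 h.symm

@[simp] theorem commute_cmt_gr_gq_gw : Commute (cmt gr gq) gw :=
  commute_of_conjBy conjBy_ga_gr commute_gr_cmt_gr_gq.symm commute_ga_cmt_gr_gq.symm

@[simp] theorem commute_cmt_gr_gq_gx : Commute (cmt gr gq) gx :=
  commute_of_conjBy conjBy_gc_gr commute_gr_cmt_gr_gq.symm commute_gc_cmt_gr_gq.symm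

@[simp] theorem commute_gr_gx : Commute gr gx := by
  simpa [mul_assoc, conjBy_eq_self_iff, commute_cmt_gr_gq_gw.eq]
    using conjBy_relation (conjBy_eq_mul_cmt gq gr) conjBy_ga_gr conjBy_ga_gq

@[simp] theorem commute_gx_gb : Commute gx gb := by
  have h := conjBy_relation conjBy_gc_gr (by simp : conjBy gb gr = gr * 1) conjBy_gb_gc
  simpa [mul_assoc, conjBy_eq_self_iff, eq_comm (a := gx)] using h

@[simp] theorem commute_gv_ga : Commute gv ga := by
  have h := conjBy_relation conjBy_gb_gq conjBy_ga_gq conjBy_ga_gb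
  simpa [mul_assoc, conjBy_eq_self_iff, eq_comm (a := gv), commute_gx_gv.symm.inv_right.eq] using h

@[simp] theorem commute_gp_gq : Commute gp gq := by
  have ha : conjBy ga (conjBy gq gp) = conjBy gq gp * gz⁻¹ := by
    simp [conjBy_conjBy ga]
  have h : gz⁻¹ * (conjBy gq gp * gv) = gz⁻¹ * conjBy gq (conjBy gq gp) * gv := by
    simpa [conjBy_gd_gp_eq, ha] using conjBy_conjBy gd ga gp
  rw [← mul_assoc, mul_left_inj, mul_right_inj] at h
  exact conjBy_eq_self_iff.1 (conjBy_injective gq h.symm)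

@[simp] theorem conjBy_gd_gp : conjBy gd gp = gp * gv := by
  rw [conjBy_gd_gp_eq, conjBy_eq_self commute_gp_gq]

@[simp] theorem commute_gv_gc : Commute gv gc := by
  simpa [mul_assoc, conjBy_eq_self_iff, commute_gv_gy.eq]
    using conjBy_relation conjBy_gc_gp conjBy_gd_gp conjBy_gd_gc

@[simp] theorem commute_gv_gr : Commute gv gr :=
  commute_of_conjBy conjBy_gc_gb commute_gv_gb commute_gv_gc

theorem commute_gq_gr : Commute gq gr := by
  simpa [mul_assoc, conjBy_eq_self_iff]
    using conjBy_relation conjBy_gb_gq conjBy_gc_gq conjBy_gc_gb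

@[simp] theorem commute_gw_gd : Commute gw gd := by
  rw [← conjBy_eq_self_iff, conjBy_gd_gw, cmt_eq_one_iff.2 commute_gq_gr.symm, one_mul]

@[simp] theorem commute_gx_ga : Commute gx ga := by
  simpa [mul_assoc, conjBy_eq_self_iff, eq_comm (a := gx), commute_gw_gx.symm.eq]
    using conjBy_relation conjBy_gc_gr conjBy_ga_gr conjBy_ga_gc

@[simp] theorem commute_gv_gp : Commute gv gp :=
  commute_of_conjBy conjBy_gc_ga commute_gv_ga commute_gv_gc

@[simp] theorem commute_gx_gc : Commute gx gc := by
  simpa [mul_assoc, conjBy_eq_self_iff, eq_comm (a := gx), commute_gx_gv.inv_left.eq]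
    using conjBy_relation conjBy_ga_gq conjBy_gc_gq conjBy_gc_ga

@[simp]
theorem commute_gx (g : N34) : Commute gx g :=
  commute_of_generators (.id _) commute_gx_ga commute_gx_gb commute_gx_gc commute_gx_gd g

theorem commute_gy (g : N34) : Commute gy g :=
  commute_of_generators (.id _) commute_gy_ga commute_gy_gb commute_gy_gc commute_gy_gd g

theorem commute_gw (g : N34) : Commute gw g :=
  commute_of_generators (.id _) commute_gw_ga commute_gw_gb commute_gw_gc commute_gw_gd g

theorem commute_gv (g : N34) : Commute gv g :=
  commute_of_generators (.id _) commute_gv_ga commute_gv_gb commute_gv_gc commute_gv_gd g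

theorem cmt_gp_gd : cmt gp gd = gv := by
  simpa [conjBy_eq_mul_cmt] using conjBy_gd_gp

theorem cmt_gr_gd : cmt gr gd = gy := by
  simpa [conjBy_eq_mul_cmt] using conjBy_gd_gr

end N34

/-! ### The Baker–Campbell–Hausdorff group -/

/-- Lie rings that are nilpotent of class at most three. -/
class IsClassThree (L : Type*) [LieRing L] : Prop where
  lie_lie_lie (w x y z : L) : ⁅w, ⁅x, ⁅y, z⁆⁆⁆ = 0

namespace IsClassThree
variable {L : Type*} [LieRing L] [IsClassThree L]

theorem lie_lie_left (w x y z : L) : ⁅⁅w, ⁅x, y⁆⁆, z⁆ = 0 := by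
  rw [← lie_skew, lie_lie_lie, neg_zero]

theorem lie_lie_both (w x y z : L) : ⁅⁅w, x⁆, ⁅y, z⁆⁆ = 0 := by
  rw [lie_lie, lie_lie_lie, lie_lie_lie, sub_zero]

end IsClassThree

/-- The group of formal exponentials of a Lie algebra over `ℚ` of class at most three, with the
product given by the Baker–Campbell–Hausdorff formula. -/
@[ext]
structure BCHGroup (L : Type*) where
  /-- The formal exponential of an element. -/
  exp ::
  /-- The inverse of `exp`. -/
  log : L

namespace BCHGroup
open IsClassThree
variable {L : Type*} [LieRing L]

instance : One (BCHGroup L) := ⟨exp 0⟩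

instance : Inv (BCHGroup L) := ⟨fun g => exp (-g.log)⟩

theorem log_one : (1 : BCHGroup L).log = 0 := rfl

theorem log_inv (g : BCHGroup L) : g⁻¹.log = -g.log := rfl

variable [LieAlgebra ℚ L]

instance : Mul (BCHGroup L) :=
  ⟨fun g h => exp (g.log + h.log + (1 / 2 : ℚ) • ⁅g.log, h.log⁆ +
    (1 / 12 : ℚ) • (⁅g.log, ⁅g.log, h.log⁆⁆ - ⁅h.log, ⁅g.log, h.log⁆⁆))⟩

theorem log_mul (g h : BCHGroup L) : (g * h).log =
    g.log + h.log + (1 / 2 : ℚ) • ⁅g.log, h.log⁆ +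
      (1 / 12 : ℚ) • (⁅g.log, ⁅g.log, h.log⁆⁆ - ⁅h.log, ⁅g.log, h.log⁆⁆) := rfl

variable [IsClassThree L]

theorem log_mul_assoc (g h k : BCHGroup L) : (g * h * k).log = (g * (h * k)).log := by
  obtain ⟨x⟩ := g
  obtain ⟨y⟩ := h
  obtain ⟨z⟩ := k
  have hz : ⁅z, ⁅x, y⁆⁆ = ⁅y, ⁅x, z⁆⁆ - ⁅x, ⁅y, z⁆⁆ := by
    rw [← lie_skew, lie_lie, neg_sub]
  simp only [log_mul, lie_add, add_lie, lie_sub, sub_lie, lie_smul, smul_lie, lie_lie_lie,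
    lie_lie_left, lie_lie_both, hz, lie_lie x y z, lie_zero]
  module

instance : Group (BCHGroup L) :=
  Group.ofLeftAxioms (fun g h k => BCHGroup.ext (log_mul_assoc g h k))
    (fun g => by ext; simp [log_mul, log_one])
    (fun g => by ext; simp [log_mul, log_inv, log_one])

theorem log_pow (g : BCHGroup L) (n : ℕ) : (g ^ n).log = (n : ℚ) • g.log := by
  induction n with
  | zero => simp [log_one]
  | succ n ih =>
    rw [pow_succ, log_mul, ih]
    simp [add_smul]

theorem log_zpow (g : BCHGroup L) (k : ℤ) : (g ^ k).log = (k : ℚ) • g.log := by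
  cases k with
  | ofNat k => simp [log_pow]
  | negSucc k => rw [zpow_negSucc, log_inv, log_pow, Int.cast_negSucc, neg_smul]

theorem log_cmt (g h : BCHGroup L) :
    (cmt g h).log = ⁅g.log, h.log⁆ - (1 / 2 : ℚ) • ⁅g.log + h.log, ⁅g.log, h.log⁆⁆ := by
  suffices H : h * g *
      exp (⁅g.log, h.log⁆ - (1 / 2 : ℚ) • ⁅g.log + h.log, ⁅g.log, h.log⁆⁆) = g * h by
    rw [← eq_inv_mul_iff_mul_eq, mul_inv_rev, ← mul_assoc] at H
    exact congrArg log H.symm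
  obtain ⟨x⟩ := g
  obtain ⟨y⟩ := h
  ext
  simp only [log_mul, lie_add, add_lie, lie_sub, sub_lie, lie_smul, smul_lie, lie_lie_lie,
    lie_lie_both, lie_zero]
  rw [← lie_skew y x, lie_neg, lie_neg]
  module

theorem log_cmt_cmt_left (g h k : BCHGroup L) :
    (cmt (cmt g h) k).log = ⁅⁅g.log, h.log⁆, k.log⁆ := by
  rw [log_cmt, log_cmt]
  simp [lie_lie_lie]

theorem log_cmt_cmt_right (g h k : BCHGroup L) :
    (cmt g (cmt h k)).log = ⁅g.log, ⁅h.log, k.log⁆⁆ := by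
  rw [log_cmt, log_cmt]
  simp [lie_lie_lie]

theorem cmt_pow_eq_iff {n : ℕ} (hn : n ≠ 0) {g h k : BCHGroup L} (hk : ∀ w : L, ⁅w, k.log⁆ = 0) :
    cmt g h ^ n = k ↔ (n : ℚ) • ⁅g.log, h.log⁆ = k.log := by
  have hn' : (n : ℚ) ≠ 0 := Nat.cast_ne_zero.2 hn
  rw [BCHGroup.ext_iff, log_pow, log_cmt]
  constructor <;> intro H
  · have central (w : L) : ⁅w, ⁅g.log, h.log⁆⁆ = 0 := by
      simpa [← H, hn', lie_lie_lie] using hk w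
    rwa [central, smul_zero, sub_zero] at H
  · have central (w : L) : ⁅w, ⁅g.log, h.log⁆⁆ = 0 := by
      simpa [← H, hn'] using hk w
    rwa [central, smul_zero, sub_zero]

end BCHGroup

/-- The Lie algebra form of `PowerRelations`, for the logarithms of the four elements. -/
structure LieRelations {L : Type*} [LieRing L] [Module ℚ L] (n : ℕ) (a b c d : L) : Prop where
  aab : ⁅a, ⁅a, b⁆⁆ = 0
  abb : ⁅⁅a, b⁆, b⁆ = 0
  acd : ⁅a, ⁅c, d⁆⁆ = 0
  add : ⁅⁅a, d⁆, d⁆ = 0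
  bbc : ⁅b, ⁅b, c⁆⁆ = 0
  bcd : ⁅b, ⁅c, d⁆⁆ = 0
  ccd : ⁅c, ⁅c, d⁆⁆ = 0
  cdd : ⁅⁅c, d⁆, d⁆ = 0
  abc : ⁅a, ⁅b, c⁆⁆ = ⁅b, ⁅a, c⁆⁆
  abd : ⁅a, ⁅b, d⁆⁆ = ⁅b, ⁅a, d⁆⁆
  aad : ⁅a, ⁅a, d⁆⁆ = ⁅⁅b, c⁆, c⁆
  aac : ⁅a, ⁅a, c⁆⁆ = ⁅b, ⁅b, d⁆⁆
  acb : ⁅⁅a, c⁆, b⁆ = ⁅⁅b, d⁆, d⁆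
  acc : ⁅⁅a, c⁆, c⁆ = ⁅⁅b, d⁆, c⁆
  adb : ⁅⁅a, d⁆, b⁆ = ⁅⁅a, d⁆, c⁆
  ab_smul : (n : ℚ) • ⁅a, b⁆ = ⁅⁅a, c⁆, c⁆
  cd_smul : (n : ℚ) • ⁅c, d⁆ = ⁅a, ⁅a, c⁆⁆

theorem BCHGroup.powerRelations_iff {L : Type*} [LieRing L] [LieAlgebra ℚ L] [IsClassThree L]
    {n : ℕ} (hn : n ≠ 0) {a b c d : BCHGroup L} :
    PowerRelations n a b c d ↔ LieRelations n a.log b.log c.log d.log := by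
  have ab_pow : cmt a b ^ n = cmt (cmt a c) c ↔
      (n : ℚ) • ⁅a.log, b.log⁆ = ⁅⁅a.log, c.log⁆, c.log⁆ := by
    rw [cmt_pow_eq_iff hn, log_cmt_cmt_left]
    intro w
    rw [log_cmt_cmt_left, ← lie_skew _ c.log, lie_neg, IsClassThree.lie_lie_lie, neg_zero]
  have cd_pow : cmt c d ^ n = cmt a (cmt a c) ↔
      (n : ℚ) • ⁅c.log, d.log⁆ = ⁅a.log, ⁅a.log, c.log⁆⁆ := by
    rw [cmt_pow_eq_iff hn, log_cmt_cmt_right]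
    intro w
    rw [log_cmt_cmt_right, IsClassThree.lie_lie_lie]
  constructor <;> intro h <;> constructor <;>
    first
    | exact ab_pow.1 h.ab_pow
    | exact cd_pow.1 h.cd_pow
    | exact ab_pow.2 h.ab_smul
    | exact cd_pow.2 h.cd_smul
    | simp only [← log_cmt_cmt_left, ← log_cmt_cmt_right, h.aab, h.abb, h.acd, h.add, h.bbc, h.bcd,
        h.ccd, h.cdd, h.abc, h.abd, h.aad, h.aac, h.acb, h.acc, h.adb, log_one]
    | simp only [BCHGroup.ext_iff, log_cmt_cmt_left, log_cmt_cmt_right, h.aab, h.abb, h.acd, h.add,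
        h.bbc, h.bcd, h.ccd, h.cdd, h.abc, h.abd, h.aad, h.aac, h.acb, h.acc, h.adb, log_one]

/-! ### Solutions of the Lie relations -/

theorem eq_zero_or_exists_eq_smul {ι K : Type*} [Field K] {u v : ι → K}
    (h : ∀ i j, u i * v j = u j * v i) : u = 0 ∨ ∃ t : K, v = t • u := by
  refine or_iff_not_imp_left.2 fun hu => ?_
  obtain ⟨i, hi⟩ := Function.ne_iff.1 hu
  refine ⟨v i / u i, funext fun j => ?_⟩
  rw [Pi.smul_apply, smul_eq_mul, div_mul_eq_mul_div, eq_div_iff hi, mul_comm, h, mul_comm]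

/-- If the wedge product `u ∧ v` is a combination of `e₀ ∧ e₁` and `e₂ ∧ e₃`, then `u` and `v` are
linearly dependent, or span the plane `⟨e₀, e₁⟩`, or span the plane `⟨e₂, e₃⟩`. -/
theorem dependent_or_spans_coordinate_plane {K : Type*} [Field K] {u v : Fin 4 → K}
    (h02 : u 0 * v 2 = u 2 * v 0) (h03 : u 0 * v 3 = u 3 * v 0) (h12 : u 1 * v 2 = u 2 * v 1)
    (h13 : u 1 * v 3 = u 3 * v 1) :
    (u = 0 ∨ ∃ t : K, v = t • u) ∨
    (u 2 = 0 ∧ u 3 = 0 ∧ v 2 = 0 ∧ v 3 = 0 ∧ u 0 * v 1 - u 1 * v 0 ≠ 0) ∨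
    (u 0 = 0 ∧ u 1 = 0 ∧ v 0 = 0 ∧ v 1 = 0 ∧ u 2 * v 3 - u 3 * v 2 ≠ 0) := by
  by_cases h01 : u 0 * v 1 - u 1 * v 0 = 0
  · by_cases h23 : u 2 * v 3 - u 3 * v 2 = 0
    · refine .inl (eq_zero_or_exists_eq_smul fun i j => ?_)
      fin_cases i <;> fin_cases j <;> grind
    · refine .inr (.inr ⟨?_, ?_, ?_, ?_, h23⟩) <;>
        refine (mul_eq_zero.1 ?_).resolve_right h23 <;> grind
  · refine .inr (.inl ⟨?_, ?_, ?_, ?_, h01⟩) <;>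
      refine (mul_eq_zero.1 ?_).resolve_right h01 <;> grind

namespace N34

/-- Index set for the basis of the Lie algebra of `N34`, with the names of the generators and of
the commutators `gp, …, gv`. -/
inductive Coord
  | a | b | c | d | p | q | r | s | x | y | z | w | v
  deriving DecidableEq

/-- The Lie algebra of `N34` over `ℚ`, in coordinates with respect to its basis. -/
def LieAlg : Type := Coord → ℚ
  deriving AddCommGroup, Module ℚ

namespace LieAlg
open Coord

/-- The minor `X i * Y j - X j * Y i`. -/
def minor (X Y : LieAlg) (i j : Coord) : ℚ := X i * Y j - X j * Y i

/-- The coordinates of the Lie bracket. They are read off from the commutators of `ga, gb, gc, gd`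
with each other and with `gp, gq, gr, gs`. -/
def lieCoord (X Y : LieAlg) : Coord → ℚ
  | a | b | c | d => 0
  | p => minor X Y a c
  | q => minor X Y a d
  | r => minor X Y b c
  | s => minor X Y b d
  | x => minor X Y r c - minor X Y q a
  | y => minor X Y a b + minor X Y p c + minor X Y r d + minor X Y s c
  | z => minor X Y c d - minor X Y p a - minor X Y s b
  | w => minor X Y p b + minor X Y r a + minor X Y s d
  | v => minor X Y p d + minor X Y q b + minor X Y q c + minor X Y s a

instance : Bracket LieAlg LieAlg := ⟨lieCoord⟩

@[ext]
theorem ext {X Y : LieAlg} (h : ∀ i, X i = Y i) : X = Y := funext h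

@[simp] theorem add_apply (X Y : LieAlg) (i : Coord) : (X + Y) i = X i + Y i := rfl

@[simp] theorem smul_apply (t : ℚ) (X : LieAlg) (i : Coord) : (t • X) i = t * X i := rfl

@[simp] theorem zero_apply (i : Coord) : (0 : LieAlg) i = 0 := rfl

theorem lie_apply (X Y : LieAlg) (i : Coord) : ⁅X, Y⁆ i = lieCoord X Y i := rfl

instance : LieRing LieAlg where
  add_lie X Y Z := by
    ext i; cases i <;> simp only [lie_apply, lieCoord, minor, add_apply] <;> ring
  lie_add X Y Z := by
    ext i; cases i <;> simp only [lie_apply, lieCoord, minor, add_apply] <;> ring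
  lie_self X := by
    ext i; cases i <;> simp only [lie_apply, lieCoord, minor, zero_apply] <;> ring
  leibniz_lie X Y Z := by
    ext i; cases i <;> simp only [lie_apply, lieCoord, minor, add_apply] <;> ring

instance : LieAlgebra ℚ LieAlg where
  lie_smul t X Y := by
    ext i; cases i <;> simp only [lie_apply, lieCoord, minor, smul_apply] <;> ring

instance : IsClassThree LieAlg where
  lie_lie_lie W X Y Z := by
    ext i; cases i <;> simp only [lie_apply, lieCoord, minor, zero_apply] <;> ring

/-- The basis vector with index `i`. -/
def e (i : Coord) : LieAlg := Pi.single i 1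

theorem e_apply (i j : Coord) : e i j = if i = j then 1 else 0 := by
  simp only [e, Pi.single_apply, eq_comm]

theorem lieRelations_smul_e (n : ℕ) :
    LieRelations n ((n : ℚ) • e a) ((n : ℚ) • e b) ((n : ℚ) • e c) ((n : ℚ) • e d) := by
  constructor <;> ext i <;> cases i <;>
    simp [lie_apply, lieCoord, minor, e_apply, mul_assoc]

theorem lie_e_eq_zero (X : LieAlg) {i : Coord} (hi : i = x ∨ i = y ∨ i = z ∨ i = w ∨ i = v) :
    ⁅X, e i⁆ = 0 := by
  obtain rfl | rfl | rfl | rfl | rfl := hi <;> ext j <;> cases j <;>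
    simp [lie_apply, lieCoord, minor, e_apply]

/-- The coordinates of `X` modulo the derived algebra. -/
def toAb : LieAlg →ₗ[ℚ] (Fin 4 → ℚ) where
  toFun X := ![X a, X b, X c, X d]
  map_add' X Y := by simp
  map_smul' t X := by simp

theorem toAb_apply (X : LieAlg) : toAb X = ![X a, X b, X c, X d] := rfl

theorem lie_lie_congr {X X' Y Y' Z Z' : LieAlg} (hX : toAb X = toAb X') (hY : toAb Y = toAb Y')
    (hZ : toAb Z = toAb Z') : ⁅X, ⁅Y, Z⁆⁆ = ⁅X', ⁅Y', Z'⁆⁆ := by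
  simp only [toAb_apply, Matrix.vecCons_inj, and_true] at hX hY hZ
  ext i
  cases i <;> simp [lie_apply, lieCoord, minor, hX, hY, hZ]

theorem lie_lie_congr_left {X X' Y Y' Z Z' : LieAlg} (hX : toAb X = toAb X')
    (hY : toAb Y = toAb Y') (hZ : toAb Z = toAb Z') : ⁅⁅X, Y⁆, Z⁆ = ⁅⁅X', Y'⁆, Z'⁆ := by
  rw [← lie_skew, lie_lie_congr hZ hX hY, lie_skew]

/-- Modulo the derived algebra, `X` and `Y` span the plane of `e a` and `e b`. -/
structure SpansAB (X Y : LieAlg) : Prop where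
  left_c : X c = 0
  left_d : X d = 0
  right_c : Y c = 0
  right_d : Y d = 0
  det_ne_zero : X a * Y b - X b * Y a ≠ 0

/-- Modulo the derived algebra, `X` and `Y` span the plane of `e c` and `e d`. -/
structure SpansCD (X Y : LieAlg) : Prop where
  left_a : X a = 0
  left_b : X b = 0
  right_a : Y a = 0
  right_b : Y b = 0
  det_ne_zero : X c * Y d - X d * Y c ≠ 0

theorem dependent_or_spans_of_smul_lie_eq {t : ℚ} (ht : t ≠ 0) {X Y W U V : LieAlg}
    (h : t • ⁅X, Y⁆ = ⁅W, ⁅U, V⁆⁆) :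
    (toAb X = 0 ∨ ∃ k : ℚ, toAb Y = k • toAb X) ∨ SpansAB X Y ∨ SpansCD X Y := by
  have coord i : t * ⁅X, Y⁆ i = ⁅W, ⁅U, V⁆⁆ i := congrFun h i
  have hp : X a * Y c = X c * Y a := by
    simpa [lie_apply, lieCoord, minor, ht, sub_eq_zero] using coord p
  have hq : X a * Y d = X d * Y a := by
    simpa [lie_apply, lieCoord, minor, ht, sub_eq_zero] using coord q
  have hr : X b * Y c = X c * Y b := by
    simpa [lie_apply, lieCoord, minor, ht, sub_eq_zero] using coord r
  have hs : X b * Y d = X d * Y b := by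
    simpa [lie_apply, lieCoord, minor, ht, sub_eq_zero] using coord s
  exact (dependent_or_spans_coordinate_plane hp hq hr hs : _ ∨ _ ∨ _).imp_right <| Or.imp
    (fun ⟨hXc, hXd, hYc, hYd, hdet⟩ => ⟨hXc, hXd, hYc, hYd, hdet⟩)
    (fun ⟨hXa, hXb, hYa, hYb, hdet⟩ => ⟨hXa, hXb, hYa, hYb, hdet⟩)

end LieAlg

end N34

namespace LieRelations
open N34 LieAlg Coord
variable {n : ℕ} {A B C D : LieAlg}

theorem lie_lie_eq_zero_of_dependent_ab (h : LieRelations n A B C D)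
    (hAB : toAb A = 0 ∨ ∃ t : ℚ, toAb B = t • toAb A) : ⁅A, ⁅A, C⁆⁆ = 0 := by
  obtain hA | ⟨t, ht⟩ := hAB
  · rw [lie_lie_congr (hA.trans (map_zero toAb).symm) rfl rfl, zero_lie]
  · rw [← map_smul] at ht
    obtain rfl | ht0 := eq_or_ne t 0
    · rw [h.aac, lie_lie_congr ht rfl rfl, zero_smul, zero_lie]
    · have hbbc := h.bbc
      rw [lie_lie_congr ht ht rfl] at hbbc
      simpa only [lie_smul, smul_lie, smul_eq_zero, ht0, false_or] using hbbc

theorem lie_lie_eq_zero_of_dependent_cd (h : LieRelations n A B C D)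
    (hCD : toAb C = 0 ∨ ∃ t : ℚ, toAb D = t • toAb C) : ⁅A, ⁅A, C⁆⁆ = 0 := by
  obtain hC | ⟨t, ht⟩ := hCD
  · rw [lie_lie_congr rfl rfl (hC.trans (map_zero toAb).symm), lie_zero, lie_zero]
  · rw [← map_smul] at ht
    obtain rfl | ht0 := eq_or_ne t 0
    · rw [h.aac, lie_lie_congr rfl rfl ht, zero_smul, lie_zero, lie_zero]
    · have hacc : ⁅⁅A, C⁆, C⁆ = 0 := by
        have hadd := h.add
        rw [lie_lie_congr_left rfl ht ht] at hadd
        simpa only [lie_smul, smul_lie, smul_eq_zero, ht0, false_or] using hadd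
      have hbcc : ⁅⁅B, C⁆, C⁆ = 0 := by
        have hbdc := h.acc.symm.trans hacc
        rw [lie_lie_congr_left rfl ht rfl] at hbdc
        simpa only [lie_smul, smul_lie, smul_eq_zero, ht0, false_or] using hbdc
      have haad := h.aad.trans hbcc
      rw [lie_lie_congr rfl rfl ht] at haad
      simpa only [lie_smul, smul_lie, smul_eq_zero, ht0, false_or] using haad

theorem not_spansCD_spansAB (h : LieRelations n A B C D) (hAB : SpansCD A B)
    (hCD : SpansAB C D) : False := by
  obtain ⟨hAa, hAb, hBa, hBb, hAB⟩ := hAB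
  obtain ⟨hCc, hCd, hDc, hDd, hCD⟩ := hCD
  have bbc_x : B c = 0 ∨ C b = 0 := by
    simpa [lie_apply, lieCoord, minor, hBa, hBb, hCc, hCd] using congrFun h.bbc x
  have bbc_w : B d = 0 ∨ C b = 0 := by
    simpa [lie_apply, lieCoord, minor, hBa, hBb, hCc, hCd] using congrFun h.bbc w
  have hCb : C b = 0 := by grind
  have hCa : C a ≠ 0 := by grind
  have hDb : D b ≠ 0 := by grind
  have hBc : B c = 0 := by
    simpa [lie_apply, lieCoord, minor, hBa, hBb, hCc, hCd, hCa, hCb] using congrFun h.bbc y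
  have adb_y : A c = 0 ∨ B d = 0 := by
    simpa [lie_apply, lieCoord, minor, hAa, hAb, hBa, hBb, hBc, hCc, hCd, hDc, hDd, hDb]
      using congrFun h.adb y
  grind

theorem lie_lie_eq_smul_e (h : LieRelations n A B C D) (hAB : SpansAB A B)
    (hCD : SpansCD C D) : ⁅A, ⁅A, C⁆⁆ = (n : ℚ) ^ 3 • e z := by
  obtain ⟨hAc, hAd, hBc, hBd, hAB⟩ := hAB
  obtain ⟨hCa, hCb, hDa, hDb, hCD⟩ := hCD
  have bbc_x : B a = 0 ∨ C d = 0 := by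
    simpa [lie_apply, lieCoord, minor, hBc, hBd, hCa, hCb] using congrFun h.bbc x
  have bbc_z : B a * (B a * C c) + B b * (B b * C d) = 0 := by
    simpa [lie_apply, lieCoord, minor, hBc, hBd, hCa, hCb] using congrFun h.bbc z
  have hBa : B a = 0 := by grind
  have hBb : B b ≠ 0 := by grind
  have hCd : C d = 0 := by grind
  have hCc : C c ≠ 0 := by grind
  have hDd : D d ≠ 0 := by grind
  have hAa : A a ≠ 0 := by grind
  have hAb : A b = 0 := by
    simpa [lie_apply, lieCoord, minor, hAc, hAd, hDa, hDb, hDd] using congrFun h.add w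
  have hDc : D c = 0 := by
    simpa [lie_apply, lieCoord, minor, hAc, hAd, hDa, hDb, hAa, hAb] using congrFun h.add y
  have adb_v : D d * B b = D d * C c := by
    simpa [lie_apply, lieCoord, minor, hAc, hAd, hAb, hBa, hBc, hBd, hCa, hCb, hCd, hDa, hDb, hDc,
      hAa, mul_assoc] using congrFun h.adb v
  have acc_y : A a * C c = B b * D d := by
    simpa [lie_apply, lieCoord, minor, hAc, hAd, hAb, hBa, hBc, hBd, hCa, hCb, hCd, hDa, hDb, hDc,
      hCc] using congrFun h.acc y
  have aac_z : A a * (A a * C c) = B b * (B b * D d) := by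
    simpa [lie_apply, lieCoord, minor, hAc, hAd, hAb, hBa, hBc, hBd, hCa, hCb, hDa, hDb]
      using congrFun h.aac z
  have ab_y : n * (A a * B b) = A a * C c * C c := by
    simpa [lie_apply, lieCoord, minor, hAc, hAd, hAb, hBa, hBc, hBd, hCa, hCb, hCd]
      using congrFun h.ab_smul y
  have hBC : B b = C c := mul_left_cancel₀ hDd adb_v
  have hAB' : A a = B b := mul_right_cancel₀ (mul_ne_zero hBb hDd) (by rw [← acc_y, aac_z, acc_y])
  have hCn : C c = n := by grind
  rw [hBC, hCn] at hAB'
  ext i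
  cases i <;>
    simp [lie_apply, lieCoord, minor, hAc, hAd, hAb, hCa, hCb, hCd, hCn, hAB', e_apply, pow_succ,
      mul_assoc]

theorem lie_lie_eq_zero_or (hn : n ≠ 0) (h : LieRelations n A B C D) :
    ⁅A, ⁅A, C⁆⁆ = 0 ∨ ⁅A, ⁅A, C⁆⁆ = (n : ℚ) ^ 3 • e z := by
  have hn' : (n : ℚ) ≠ 0 := Nat.cast_ne_zero.2 hn
  have hACC : ⁅⁅A, C⁆, C⁆ = ⁅C, ⁅C, A⁆⁆ := by
    rw [← lie_skew, ← lie_skew C A, lie_neg]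
  obtain hAB | hAB | hAB := dependent_or_spans_of_smul_lie_eq hn' (h.ab_smul.trans hACC)
  · exact .inl (h.lie_lie_eq_zero_of_dependent_ab hAB)
  all_goals obtain hCD | hCD | hCD := dependent_or_spans_of_smul_lie_eq hn' h.cd_smul
  · exact .inl (h.lie_lie_eq_zero_of_dependent_cd hCD)
  · left
    ext i
    cases i <;> simp [lie_apply, lieCoord, minor, hAB.left_c, hAB.left_d, hCD.left_c, hCD.left_d]
  · exact .inr (h.lie_lie_eq_smul_e hAB hCD)
  · exact .inl (h.lie_lie_eq_zero_of_dependent_cd hCD)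
  · exact (h.not_spansCD_spansAB hAB hCD).elim
  · left
    ext i
    cases i <;> simp [lie_apply, lieCoord, minor, hAB.left_a, hAB.left_b, hCD.left_a, hCD.left_b]

end LieRelations

/-! ### Transfer to the group -/

namespace N34
open BCHGroup LieAlg

/-- The homomorphism taking the generators of `N34` to the exponentials of basis vectors. -/
def toBCH : N34 →* BCHGroup LieAlg :=
  PresentedGroup.toGroup (rels := N34Rels) (f := ![exp (e .a), exp (e .b), exp (e .c), exp (e .d)])
    ((forall_relators_iff _).2 <| (powerRelations_iff one_ne_zero).2 <| by
      simpa [FreeGroup.lift_apply_of] using lieRelations_smul_e 1)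

theorem log_toBCH_ga : (toBCH ga).log = e .a := congrArg log (PresentedGroup.toGroup.of _)

theorem log_toBCH_gb : (toBCH gb).log = e .b := congrArg log (PresentedGroup.toGroup.of _)

theorem log_toBCH_gc : (toBCH gc).log = e .c := congrArg log (PresentedGroup.toGroup.of _)

theorem log_toBCH_gd : (toBCH gd).log = e .d := congrArg log (PresentedGroup.toGroup.of _)

theorem powerRelations_toBCH_pow {n : ℕ} (hn : n ≠ 0) :
    PowerRelations n (toBCH (ga ^ n)) (toBCH (gb ^ n)) (toBCH (gc ^ n)) (toBCH (gd ^ n)) := by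
  rw [powerRelations_iff hn]
  simpa only [map_pow, log_pow, log_toBCH_ga, log_toBCH_gb, log_toBCH_gc, log_toBCH_gd]
    using lieRelations_smul_e n

theorem log_toBCH_gx : (toBCH gx).log = e .x := by
  rw [gx, gq, map_cmt, map_cmt, log_cmt_cmt_right, log_toBCH_ga, log_toBCH_gd]
  ext i
  cases i <;> simp [lie_apply, lieCoord, minor, e_apply]

theorem log_toBCH_gy : (toBCH gy).log = e .y := by
  rw [← cmt_gp_gc, gp, map_cmt, map_cmt, log_cmt_cmt_left, log_toBCH_ga, log_toBCH_gc]
  ext i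
  cases i <;> simp [lie_apply, lieCoord, minor, e_apply]

theorem log_toBCH_gz : (toBCH gz).log = e .z := by
  rw [← inv_inv gz, ← cmt_gp_ga, cmt_inv, gp, map_cmt, map_cmt, log_cmt_cmt_right, log_toBCH_ga,
    log_toBCH_gc]
  ext i
  cases i <;> simp [lie_apply, lieCoord, minor, e_apply]

theorem log_toBCH_gw : (toBCH gw).log = e .w := by
  rw [gw, gp, map_cmt, map_cmt, log_cmt_cmt_left, log_toBCH_ga, log_toBCH_gb, log_toBCH_gc]
  ext i
  cases i <;> simp [lie_apply, lieCoord, minor, e_apply]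

theorem log_toBCH_gv : (toBCH gv).log = e .v := by
  rw [gv, gq, map_cmt, map_cmt, log_cmt_cmt_left, log_toBCH_ga, log_toBCH_gb, log_toBCH_gd]
  ext i
  cases i <;> simp [lie_apply, lieCoord, minor, e_apply]

theorem mem_center_of_commute {t : N34} (h : ∀ g, Commute t g) : t ∈ Subgroup.center N34 :=
  Subgroup.mem_center_iff.2 fun g => (h g).eq.symm

/-- The elements `gx, gy, gz, gw, gv` of the center. -/
def centralBasis : Fin 5 → Subgroup.center N34 :=
  ![⟨gx, mem_center_of_commute commute_gx⟩, ⟨gy, mem_center_of_commute commute_gy⟩,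
    ⟨gz, mem_center_of_commute commute_gz⟩, ⟨gw, mem_center_of_commute commute_gw⟩,
    ⟨gv, mem_center_of_commute commute_gv⟩]

/-- The central subgroup generated by `gx, gy, gz, gw, gv`. -/
def S : Subgroup N34 :=
  (Subgroup.closure (Set.range centralBasis)).map (Subgroup.center N34).subtype

theorem coe_centralBasis_mem_S (i : Fin 5) : (centralBasis i : N34) ∈ S :=
  ⟨_, Subgroup.subset_closure ⟨i, rfl⟩, rfl⟩

theorem gx_mem_S : gx ∈ S := coe_centralBasis_mem_S 0

theorem gy_mem_S : gy ∈ S := coe_centralBasis_mem_S 1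

theorem gz_mem_S : gz ∈ S := coe_centralBasis_mem_S 2

theorem gw_mem_S : gw ∈ S := coe_centralBasis_mem_S 3

theorem gv_mem_S : gv ∈ S := coe_centralBasis_mem_S 4

theorem S_le_center : S ≤ Subgroup.center N34 := Subgroup.map_subtype_le _

instance : S.Normal := normal_of_le_center S_le_center

theorem log_toBCH_central (i j k l m : ℤ) :
    (toBCH (gx ^ i * gy ^ j * gz ^ k * gw ^ l * gv ^ m)).log =
      (i : ℚ) • e .x + (j : ℚ) • e .y + (k : ℚ) • e .z + (l : ℚ) • e .w + (m : ℚ) • e .v := by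
  simp only [map_mul, map_zpow, log_mul, log_zpow, log_toBCH_gx, log_toBCH_gy, log_toBCH_gz,
    log_toBCH_gw, log_toBCH_gv, lie_smul, lie_e_eq_zero, true_or, or_true, reduceCtorEq, smul_zero,
    lie_zero, sub_zero, add_zero]

open scoped IsMulCommutative in
theorem toBCH_injOn_S : Set.InjOn toBCH S := by
  refine (Set.injOn_iff_map_eq_one _ _).2 ?_
  rintro _ ⟨t, ht, rfl⟩ h
  obtain ⟨k, rfl⟩ := Subgroup.exists_of_mem_closure_range _ _ ht
  have hprod : (Subgroup.center N34).subtype (∏ i, centralBasis i ^ k i) =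
      gx ^ k 0 * gy ^ k 1 * gz ^ k 2 * gw ^ k 3 * gv ^ k 4 := by
    rw [Fin.prod_univ_five]
    rfl
  rw [hprod] at h ⊢
  have hlog := congrArg log h
  rw [log_toBCH_central, log_one] at hlog
  have hk (i) := congrFun hlog i
  have hx : k 0 = 0 := by simpa [e_apply] using hk .x
  have hy : k 1 = 0 := by simpa [e_apply] using hk .y
  have hz : k 2 = 0 := by simpa [e_apply] using hk .z
  have hw : k 3 = 0 := by simpa [e_apply] using hk .w
  have hv : k 4 = 0 := by simpa [e_apply] using hk .v
  simp only [hx, hy, hz, hw, hv, zpow_zero, mul_one]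

theorem cmt_mem_S_of_generators {g : N34} (ha : cmt g ga ∈ S) (hb : cmt g gb ∈ S)
    (hc : cmt g gc ∈ S) (hd : cmt g gd ∈ S) (h : N34) : cmt g h ∈ S := by
  rw [← commute_mk'_iff] at ha hb hc hd ⊢
  exact commute_of_generators _ ha hb hc hd h

theorem cmt_gp_mem_S : ∀ g, cmt gp g ∈ S :=
  cmt_mem_S_of_generators (cmt_gp_ga ▸ S.inv_mem gz_mem_S) gw_mem_S (cmt_gp_gc ▸ gy_mem_S)
    (cmt_gp_gd ▸ gv_mem_S)

theorem cmt_gq_mem_S : ∀ g, cmt gq g ∈ S :=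
  cmt_mem_S_of_generators (cmt_gq_ga ▸ S.inv_mem gx_mem_S) gv_mem_S (cmt_gq_gc ▸ gv_mem_S)
    (cmt_eq_one_iff.2 commute_gq_gd ▸ S.one_mem)

theorem cmt_gr_mem_S : ∀ g, cmt gr g ∈ S :=
  cmt_mem_S_of_generators (cmt_gr_ga ▸ gw_mem_S) (cmt_eq_one_iff.2 commute_gr_gb ▸ S.one_mem)
    (cmt_gr_gc ▸ gx_mem_S) (cmt_gr_gd ▸ gy_mem_S)

theorem cmt_gs_mem_S : ∀ g, cmt gs g ∈ S :=
  cmt_mem_S_of_generators (cmt_gs_ga ▸ gv_mem_S) (cmt_gs_gb ▸ S.inv_mem gz_mem_S)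
    (cmt_gs_gc ▸ gy_mem_S) (cmt_gs_gd ▸ gw_mem_S)

theorem cmt_gy_mem_S (g : N34) : cmt gy g ∈ S :=
  cmt_eq_one_iff.2 (commute_gy g) ▸ S.one_mem

theorem cmt_gz_mem_S (g : N34) : cmt gz g ∈ S :=
  cmt_eq_one_iff.2 (commute_gz g) ▸ S.one_mem

theorem cmt_cmt_mem_S (g h k : N34) : cmt (cmt g h) k ∈ S := by
  let π := (QuotientGroup.mk' (Subgroup.center (N34 ⧸ S))).comp (QuotientGroup.mk' S)
  have commute_iff (u v : N34) : Commute (π u) (π v) ↔ ∀ k, cmt (cmt u v) k ∈ S := by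
    simp only [π, MonoidHom.comp_apply, commute_mk'_iff, ← map_cmt, Subgroup.mem_center_iff,
      (QuotientGroup.mk'_surjective S).forall, ← commute_iff_eq]
    exact forall_congr' fun k => by rw [← cmt_inv, inv_mem_iff]
  have hab := (commute_iff ga gb).2 cmt_gy_mem_S
  have hac := (commute_iff ga gc).2 cmt_gp_mem_S
  have had := (commute_iff ga gd).2 cmt_gq_mem_S
  have hbc := (commute_iff gb gc).2 cmt_gr_mem_S
  have hbd := (commute_iff gb gd).2 cmt_gs_mem_S
  have hcd := (commute_iff gc gd).2 cmt_gz_mem_S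
  have ha := commute_of_generators π (.refl _) hab hac had h
  have hb := commute_of_generators π hab.symm (.refl _) hbc hbd h
  have hc := commute_of_generators π hac.symm hbc.symm (.refl _) hcd h
  have hd := commute_of_generators π had.symm hbd.symm hcd.symm (.refl _) h
  exact (commute_iff g h).1 (commute_of_generators π ha.symm hb.symm hc.symm hd.symm g).symm k

theorem cmt_pow_pow_mem_S {g h : N34} (hgh : cmt g h ∈ S) (n : ℕ) : cmt (g ^ n) (h ^ n) ∈ S := by
  rw [← commute_mk'_iff] at hgh ⊢
  rw [map_pow, map_pow]
  exact hgh.pow_pow n n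

theorem cmt_pow_cmt_pow_pow (n : ℕ) :
    cmt (ga ^ n) (cmt (ga ^ n) (gc ^ n)) = gz ^ n ^ 3 := by
  refine toBCH_injOn_S ?_ (S.pow_mem gz_mem_S _) (BCHGroup.ext ?_)
  · rw [← cmt_inv]
    exact S.inv_mem (cmt_cmt_mem_S _ _ _)
  · rw [map_cmt, map_cmt, log_cmt_cmt_right]
    simp only [map_pow, log_pow, log_toBCH_ga, log_toBCH_gc, log_toBCH_gz]
    ext i
    cases i <;> simp [lie_apply, lieCoord, minor, e_apply, pow_succ, mul_assoc]

theorem powerRelations_subgroup {n : ℕ} (hn : n ≠ 0) {H : Subgroup N34} (hH : ∀ g, g ^ n ∈ H) :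
    PowerRelations n (⟨ga ^ n, hH _⟩ : H) ⟨gb ^ n, hH _⟩ ⟨gc ^ n, hH _⟩ ⟨gd ^ n, hH _⟩ :=
  .of_injOn (f := toBCH.comp H.subtype) (S := S.comap H.subtype)
    (toBCH_injOn_S.comp H.subtype_injective.injOn fun _ h => h)
    (fun g h k => cmt_cmt_mem_S g h k)
    (cmt_pow_pow_mem_S gy_mem_S n) (cmt_pow_pow_mem_S gz_mem_S n) (powerRelations_toBCH_pow hn)

theorem map_gz_pow_eq_one_or {n : ℕ} (hn : n ≠ 0) {H : Subgroup N34} (hH : ∀ g, g ^ n ∈ H)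
    (hz : gz ^ n ^ 3 ∈ H) (f : H →* N34) :
    f ⟨gz ^ n ^ 3, hz⟩ = 1 ∨ f ⟨gz ^ n ^ 3, hz⟩ = gz ^ n ^ 3 := by
  have hrel := (powerRelations_iff hn).1 ((powerRelations_subgroup hn hH).map (toBCH.comp f))
  have hcmt : (⟨gz ^ n ^ 3, hz⟩ : H) =
      cmt ⟨ga ^ n, hH _⟩ (cmt ⟨ga ^ n, hH _⟩ ⟨gc ^ n, hH _⟩) :=
    Subtype.ext (cmt_pow_cmt_pow_pow n).symm
  have hS : f ⟨gz ^ n ^ 3, hz⟩ ∈ S := by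
    rw [hcmt, map_cmt, map_cmt, ← cmt_inv]
    exact S.inv_mem (cmt_cmt_mem_S _ _ _)
  have h := hrel.lie_lie_eq_zero_or hn
  rw [← log_cmt_cmt_right, ← map_cmt, ← map_cmt, ← hcmt] at h
  refine h.imp (fun h => toBCH_injOn_S hS S.one_mem ?_)
    (fun h => toBCH_injOn_S hS (S.pow_mem gz_mem_S _) ?_)
  · rw [map_one]
    exact BCHGroup.ext h
  · rw [map_pow]
    ext1
    rw [log_pow, log_toBCH_gz, Nat.cast_pow]
    exact h

theorem gz_pow_ne_one {m : ℕ} (hm : m ≠ 0) : gz ^ m ≠ 1 := by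
  intro h
  have := congrFun (congrArg log (congrArg toBCH h)) .z
  rw [map_pow, log_pow, log_toBCH_gz, map_one, log_one] at this
  simp [e_apply, hm] at this

end N34

theorem N34_no_trivial_core_general (K : Subgroup N34) [K.FiniteIndex] :
    ∃ N : Subgroup N34, N ≠ ⊥ ∧ N ≤ K ∧ N.Normal ∧
      ∀ H, K ≤ H → ∀ f : H →* N34, (N.subgroupOf H).map f ≤ N := by
  set n := K.normalCore.index
  have hn : n ≠ 0 := Subgroup.FiniteIndex.index_ne_zero
  have hK (g : N34) : g ^ n ∈ K := K.normalCore_le (Subgroup.pow_index_mem _ g)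
  have hz : N34.gz ^ n ^ 3 ∈ K := by
    rw [pow_succ, pow_mul]
    exact hK _
  refine ⟨.zpowers (N34.gz ^ n ^ 3), ?_, ?_, ?_, fun H hKH f => ?_⟩
  · rw [Ne, Subgroup.zpowers_eq_bot]
    exact N34.gz_pow_ne_one (pow_ne_zero 3 hn)
  · rwa [Subgroup.zpowers_le]
  · refine normal_of_le_center (Subgroup.zpowers_le.2 (N34.S_le_center ?_))
    exact N34.S.pow_mem N34.gz_mem_S _
  · rw [zpowers_subgroupOf ⟨N34.gz ^ n ^ 3, hKH hz⟩, MonoidHom.map_zpowers, Subgroup.zpowers_le]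
    obtain h | h := N34.map_gz_pow_eq_one_or hn (fun g => hKH (hK g)) (hKH hz) f <;> rw [h]
    · exact Subgroup.one_mem _
    · exact Subgroup.mem_zpowers _

/-- For every finite family of finite-index subgroups `H i` of `N_{3,4}` and homomorphisms
`f i : H i → N_{3,4}`, there is a nontrivial subgroup `N` of `⋂ i, H i`, normal in
`N_{3,4}`, with `f i (N) ≤ N` for all `i`. Consequently (a nontrivial `F`-core always
exists), `N_{3,4}` admits no faithful state-closed representation on any regular rooted
tree, transitive or not. -/
theorem N34_no_trivial_core (s : ℕ) (H : Fin s → Subgroup N34)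
    (hH : ∀ i, (H i).FiniteIndex)
    (f : (i : Fin s) → (↥(H i) →* N34)) :
    ∃ N : Subgroup N34, N ≠ ⊥ ∧ N ≤ ⨅ i, H i ∧ N.Normal ∧
      ∀ i, Subgroup.map (f i) (N.subgroupOf (H i)) ≤ N := by
  have := Subgroup.finiteIndex_iInf hH
  obtain ⟨N, hbot, hle, hnormal, hmap⟩ := N34_no_trivial_core_general (⨅ i, H i)
  exact ⟨N, hbot, hle, hnormal, fun i => hmap (H i) (iInf_le H i) (f i)⟩
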